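/- arXiv:1903.03880 — 3 statements merged into one kernel-verified Lean document; each statement's English description precedes it below -/
import Mathlib

section
/- Let n be a finite type, let F ⊆ Matrix n n ℂ be a compact set, and let ρ ∈ Matrix n n ℂ. Suppose that for every ε > 0 there exist a real number s with 0 ≤ s < ε and matrices τ, δ ∈ F such that ρ + s • τ = (1+s) • δ. Then ρ ∈ F. In particular, the robustness of non-Markovianity of ρ with respect to F vanishes if and only if ρ ∈ F (faithfulness); the converse direction holds trivially by taking s = 0. -/
open Matrix
open scoped ComplexOrder

/-!
Solving the mixing equation for `δ` gives `δ = (1 + s)⁻¹ • (ρ + s • τ)`. When `τ` ranges over a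
bounded set, `s • τ → 0` as `s → 0`, so `δ → ρ` even if `τ` does not converge, and closedness of `F`
puts `ρ` in `F`.
-/

open Bornology Filter Topology

section TopologicalVectorSpace

variable {𝕜 E : Type*} [NormedField 𝕜] [AddCommGroup E] [Module 𝕜 E] [TopologicalSpace E]
  [ContinuousAdd E] [ContinuousSMul 𝕜 E] {B F : Set E} {ρ : E}

theorem tendsto_of_add_smul_eq_one_add_smul {ι : Type*} {l : Filter ι} {s : ι → 𝕜} {τ δ : ι → E}
    (hB : IsVonNBounded 𝕜 B) (hs : Tendsto s l (𝓝 0)) (hτ : ∀ᶠ i in l, τ i ∈ B)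
    (hmix : ∀ᶠ i in l, ρ + s i • τ i = (1 + s i) • δ i) :
    Tendsto δ l (𝓝 ρ) := by
  have weight : Tendsto (fun i ↦ 1 + s i) l (𝓝 1) := by simpa using hs.const_add 1
  have noise : Tendsto (fun i ↦ s i • τ i) l (𝓝 0) := hB.smul_tendsto_zero hτ hs
  have solved : Tendsto (fun i ↦ (1 + s i)⁻¹ • (ρ + s i • τ i)) l (𝓝 ρ) := by
    simpa using (weight.inv₀ one_ne_zero).smul (noise.const_add ρ)
  refine solved.congr' ?_
  filter_upwards [hmix, weight.eventually_ne one_ne_zero] with i hi hne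
  rw [hi, inv_smul_smul₀ hne]

theorem robustness_faithful_general (hB : IsVonNBounded 𝕜 B) (hF : IsClosed F)
    (h : ∀ ε : ℝ, 0 < ε → ∃ s : 𝕜, ‖s‖ < ε ∧ ∃ τ ∈ B, ∃ δ ∈ F, ρ + s • τ = (1 + s) • δ) :
    ρ ∈ F := by
  choose s hs τ hτ δ hδ hmix using fun k : ℕ ↦ h (1 / (k + 1)) Nat.one_div_pos_of_nat
  have hs₀ : Tendsto s atTop (𝓝 0) :=
    squeeze_zero_norm (fun k ↦ (hs k).le) tendsto_one_div_add_atTop_nhds_zero_nat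
  have hδρ : Tendsto δ atTop (𝓝 ρ) :=
    tendsto_of_add_smul_eq_one_add_smul hB hs₀ (.of_forall hτ) (.of_forall hmix)
  exact hF.mem_of_tendsto hδρ (.of_forall hδ)

end TopologicalVectorSpace

/-- Faithfulness of the robustness of non-Markovianity: if for every `ε > 0` the Choi matrix
`ρ` admits a mixing `(ρ + s τ)/(1+s) ∈ F` with Markovian noise `τ ∈ F` of weight `s < ε`,
then `ρ` itself lies in the (compact) set `F` of Markovian Choi matrices. -/
theorem robustness_faithful {n : Type*} [Fintype n]
    (F : Set (Matrix n n ℂ)) (hF : IsCompact F) (ρ : Matrix n n ℂ)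
    (h : ∀ ε : ℝ, 0 < ε → ∃ s : ℝ, 0 ≤ s ∧ s < ε ∧
      ∃ τ ∈ F, ∃ δ ∈ F, ρ + s • τ = (1 + s) • δ) :
    ρ ∈ F :=
  robustness_faithful_general (𝕜 := ℝ) (hF.isVonNBounded ℝ) hF.isClosed fun ε hε ↦
    (h ε hε).imp fun _ ⟨hs, hsε, hmix⟩ ↦ ⟨(Real.norm_of_nonneg hs).trans_lt hsε, hmix⟩
end

section
/- Let n be a finite type and let F ⊆ Matrix n n ℂ be convex over ℝ. Let ρ₁, ρ₂ ∈ Matrix n n ℂ admit decompositions ρ₁ = (1+s₁) • δ₁ - s₁ • τ₁ and ρ₂ = (1+s₂) • δ₂ - s₂ • τ₂ with s₁, s₂ ≥ 0 and δ₁, δ₂, τ₁, τ₂ ∈ F. Then for every p ∈ [0,1], setting s = p·s₁ + (1-p)·s₂, there exist δ, τ ∈ F such that p • ρ₁ + (1-p) • ρ₂ = (1+s) • δ - s • τ. Consequently the robustness of non-Markovianity with respect to F is a convex function: mixing two non-Markovian Choi matrices cannot increase it beyond the corresponding convex combination. -/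
open Matrix
open scoped ComplexOrder

/-- Taking `G = F` gives the robustness; a larger `G`, such as the set of all Choi matrices,
gives the generalized robustness. -/
theorem robustness_convex_general {𝕜 E : Type*} [Field 𝕜] [LinearOrder 𝕜]
    [IsStrictOrderedRing 𝕜] [AddCommGroup E] [Module 𝕜 E] {F G : Set E}
    (hF : Convex 𝕜 F) (hG : Convex 𝕜 G) {ρ₁ ρ₂ δ₁ δ₂ τ₁ τ₂ : E} {s₁ s₂ : 𝕜}
    (hs₁ : 0 ≤ s₁) (hs₂ : 0 ≤ s₂)
    (hδ₁ : δ₁ ∈ F) (hδ₂ : δ₂ ∈ F) (hτ₁ : τ₁ ∈ G) (hτ₂ : τ₂ ∈ G)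
    (h₁ : ρ₁ = (1 + s₁) • δ₁ - s₁ • τ₁) (h₂ : ρ₂ = (1 + s₂) • δ₂ - s₂ • τ₂)
    {a b : 𝕜} (ha : 0 ≤ a) (hb : 0 ≤ b) (hab : a + b = 1) :
    ∃ δ ∈ F, ∃ τ ∈ G,
      a • ρ₁ + b • ρ₂ = (1 + (a * s₁ + b * s₂)) • δ - (a * s₁ + b * s₂) • τ := by
  obtain ⟨δ, hδ, hδ_eq⟩ : ∃ δ ∈ F, (a * (1 + s₁) + b * (1 + s₂)) • δ =
      (a * (1 + s₁)) • δ₁ + (b * (1 + s₂)) • δ₂ :=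
    hF.exists_mem_add_smul_eq hδ₁ hδ₂ (by positivity) (by positivity)
  obtain ⟨τ, hτ, hτ_eq⟩ : ∃ τ ∈ G, (a * s₁ + b * s₂) • τ = (a * s₁) • τ₁ + (b * s₂) • τ₂ :=
    hG.exists_mem_add_smul_eq hτ₁ hτ₂ (by positivity) (by positivity)
  have weight_eq : 1 + (a * s₁ + b * s₂) = a * (1 + s₁) + b * (1 + s₂) := by
    linear_combination -hab
  refine ⟨δ, hδ, τ, hτ, ?_⟩
  calc
    a • ρ₁ + b • ρ₂
        = ((a * (1 + s₁)) • δ₁ + (b * (1 + s₂)) • δ₂) - ((a * s₁) • τ₁ + (b * s₂) • τ₂) := by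
      rw [h₁, h₂]
      module
    _ = (1 + (a * s₁ + b * s₂)) • δ - (a * s₁ + b * s₂) • τ := by
      rw [weight_eq, hδ_eq, hτ_eq]

/-- Convexity of the robustness of non-Markovianity: given pseudo-mixture decompositions of
`ρ₁` and `ρ₂` with weights `s₁, s₂` over a convex set `F` of Markovian Choi matrices, the
convex combination `p ρ₁ + (1-p) ρ₂` admits a decomposition with weight
`s = p s₁ + (1-p) s₂`. -/
theorem robustness_convex {n : Type*} [Fintype n]
    (F : Set (Matrix n n ℂ)) (hF : Convex ℝ F)
    (ρ₁ ρ₂ δ₁ δ₂ τ₁ τ₂ : Matrix n n ℂ) (s₁ s₂ : ℝ)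
    (hs₁ : 0 ≤ s₁) (hs₂ : 0 ≤ s₂)
    (hδ₁ : δ₁ ∈ F) (hδ₂ : δ₂ ∈ F) (hτ₁ : τ₁ ∈ F) (hτ₂ : τ₂ ∈ F)
    (h₁ : ρ₁ = (1 + s₁) • δ₁ - s₁ • τ₁) (h₂ : ρ₂ = (1 + s₂) • δ₂ - s₂ • τ₂)
    (p : ℝ) (hp : p ∈ Set.Icc (0 : ℝ) 1) :
    ∃ δ ∈ F, ∃ τ ∈ F,
      p • ρ₁ + (1 - p) • ρ₂ =
        (1 + (p * s₁ + (1 - p) * s₂)) • δ - (p * s₁ + (1 - p) * s₂) • τ :=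
  robustness_convex_general hF hF hs₁ hs₂ hδ₁ hδ₂ hτ₁ hτ₂ h₁ h₂ hp.1 (sub_nonneg.2 hp.2)
    (add_sub_cancel p 1)
end

section
/- Let n be a finite type and let Λ, Γ, Φ : Matrix n n ℂ →ₗ[ℂ] Matrix n n ℂ satisfy Λ = (1+s) • Γ - s • Φ with s ≥ 0 and Φ positive (Φ maps positive semidefinite matrices to positive semidefinite matrices). Then for every nonempty finite index type J, every family of reals p_j ≥ 0 and density matrices σ_j ∈ Matrix n n ℂ (j ∈ J), and every POVM, i.e., finite family (N_y)_{y ∈ Y} of positive semidefinite matrices with Σ_y N_y = 1, one has Σ_{y ∈ Y} max_{j ∈ J} (p_j · Re Tr(Λ(σ_j) · N_y)) ≤ (1+s) · Σ_{y ∈ Y} max_{j ∈ J} (p_j · Re Tr(Γ(σ_j) · N_y)). -/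
/-!
On positive semidefinite inputs `Λ = (1 + s)Γ - sΦ` is dominated by `(1 + s)Γ` in the Loewner order,
since only a positive semidefinite term is subtracted. For each measurement effect `N y` the
functional `A ↦ Re Tr(A * N y)` is monotone in that order, so the bound passes to every term, hence
to the maximum over the guesses and to the sum over the outcomes.
-/

open Matrix
open scoped ComplexOrder

/-- A density matrix: positive semidefinite with unit trace. -/
def IsDensityMatrix {n : Type*} [Fintype n] (ρ : Matrix n n ℂ) : Prop :=
  ρ.PosSemidef ∧ ρ.trace = 1

/-- A positive map: maps positive semidefinite matrices to positive semidefinite matrices. -/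
def IsPositiveMap {n : Type*} [Fintype n]
    (Φ : Matrix n n ℂ →ₗ[ℂ] Matrix n n ℂ) : Prop :=
  ∀ X : Matrix n n ℂ, X.PosSemidef → (Φ X).PosSemidef

open scoped MatrixOrder

section Trace

variable {𝕜 n : Type*} [RCLike 𝕜] [Fintype n] {A B C : Matrix n n 𝕜}

theorem trace_mul_nonneg_of_posSemidef (hA : A.PosSemidef) (hB : B.PosSemidef) :
    0 ≤ (A * B).trace := by
  classical
  obtain ⟨S, rfl⟩ := CStarAlgebra.nonneg_iff_eq_star_mul_self.mp hB.nonneg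
  calc
    0 ≤ (S * A * Sᴴ).trace := (hA.mul_mul_conjTranspose_same S).trace_nonneg
    _ = (A * (star S * S)).trace := by
      rw [Matrix.mul_assoc, trace_mul_comm, Matrix.mul_assoc, star_eq_conjTranspose]

theorem re_trace_mul_le_re_trace_mul_of_le (hAB : A ≤ B) (hC : C.PosSemidef) :
    RCLike.re (A * C).trace ≤ RCLike.re (B * C).trace := by
  have trace_diff_nonneg : 0 ≤ ((B - A) * C).trace :=
    trace_mul_nonneg_of_posSemidef (le_iff.mp hAB) hC
  rw [sub_mul, trace_sub, sub_nonneg] at trace_diff_nonneg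
  exact RCLike.re_le_re trace_diff_nonneg

end Trace

section GuessingProbability

variable {𝕜 n J Y : Type*} [RCLike 𝕜] [Fintype n] [Fintype J] [Nonempty J] [Fintype Y]
  {p : J → ℝ} {ρ τ : J → Matrix n n 𝕜} {N : Y → Matrix n n 𝕜} {c : ℝ}

/-- The guessing probability `∑ y, max_j p j * Re Tr(ρ j * N y)` of the ensemble `(p j, ρ j)` under
the measurement with effects `N y`: on outcome `y`, the best index `j` is guessed. The weights, the
states and the effects need not be normalized. -/
noncomputable def guessingProbability (p : J → ℝ) (ρ : J → Matrix n n 𝕜) (N : Y → Matrix n n 𝕜) :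
    ℝ :=
  ∑ y, Finset.univ.sup' Finset.univ_nonempty fun j => p j * RCLike.re (ρ j * N y).trace

theorem guessingProbability_mono (hp : ∀ j, 0 ≤ p j) (hρτ : ∀ j, ρ j ≤ τ j)
    (hN : ∀ y, (N y).PosSemidef) :
    guessingProbability p ρ N ≤ guessingProbability p τ N :=
  Finset.sum_le_sum fun y _ => Finset.sup'_mono_fun fun j _ =>
    mul_le_mul_of_nonneg_left (re_trace_mul_le_re_trace_mul_of_le (hρτ j) (hN y)) (hp j)

theorem guessingProbability_smul (hc : 0 ≤ c) (p : J → ℝ) (ρ : J → Matrix n n 𝕜)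
    (N : Y → Matrix n n 𝕜) :
    guessingProbability p (c • ρ) N = c * guessingProbability p ρ N := by
  have trace_smul_mul (j : J) (y : Y) :
      p j * RCLike.re ((c • ρ) j * N y).trace = c * (p j * RCLike.re (ρ j * N y).trace) := by
    rw [Pi.smul_apply, smul_mul_assoc, trace_smul, RCLike.smul_re, mul_left_comm]
  simp only [guessingProbability, trace_smul_mul, Finset.mul_sum, Finset.mul₀_sup' hc]

theorem guessing_probability_bound_general (hc : 0 ≤ c) (hp : ∀ j, 0 ≤ p j)
    (hρτ : ∀ j, ρ j ≤ c • τ j) (hN : ∀ y, (N y).PosSemidef) :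
    guessingProbability p ρ N ≤ c * guessingProbability p τ N :=
  (guessingProbability_mono hp hρτ hN).trans_eq (guessingProbability_smul hc p τ N)

end GuessingProbability

theorem IsPositiveMap.smul_sub_smul_apply_le {n : Type*} [Fintype n]
    {Φ : Matrix n n ℂ →ₗ[ℂ] Matrix n n ℂ} (hΦ : IsPositiveMap Φ)
    (Γ : Matrix n n ℂ →ₗ[ℂ] Matrix n n ℂ) (c : ℝ) {s : ℝ} (hs : 0 ≤ s) {X : Matrix n n ℂ}
    (hX : X.PosSemidef) : ((c : ℂ) • Γ - (s : ℂ) • Φ) X ≤ c • Γ X := by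
  simp only [LinearMap.sub_apply, LinearMap.smul_apply, Complex.coe_smul]
  exact sub_le_self _ ((hΦ X hX).smul hs).nonneg

/-- Core inequality of the single-shot information-theoretic bound: for
`Λ = (1+s)Γ - sΦ` with `Φ` positive, the guessing probability
`Σ_y max_j p_j Re Tr[Λ(σ_j)N_y]` is at most `(1+s)` times that of `Γ`. -/
theorem guessing_probability_bound {n : Type*} [Fintype n]
    (Λ Γ Φ : Matrix n n ℂ →ₗ[ℂ] Matrix n n ℂ) (s : ℝ) (hs : 0 ≤ s)
    (hΦ : IsPositiveMap Φ)
    (hdec : Λ = (((1 + s : ℝ) : ℂ)) • Γ - ((s : ℝ) : ℂ) • Φ)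
    (J : Type*) [Fintype J] [Nonempty J]
    (p : J → ℝ) (hp : ∀ j, 0 ≤ p j)
    (σ : J → Matrix n n ℂ) (hσ : ∀ j, IsDensityMatrix (σ j))
    (Y : Type*) [Fintype Y] [DecidableEq n]
    (N : Y → Matrix n n ℂ) (hNpos : ∀ y, (N y).PosSemidef)
    (hNsum : ∑ y, N y = 1) :
    ∑ y, Finset.univ.sup' Finset.univ_nonempty
        (fun j => p j * ((Λ (σ j) * N y).trace).re) ≤
      (1 + s) * ∑ y, Finset.univ.sup' Finset.univ_nonempty
        (fun j => p j * ((Γ (σ j) * N y).trace).re) := by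
  have Λ_le (j : J) : Λ (σ j) ≤ (1 + s) • Γ (σ j) :=
    hdec ▸ hΦ.smul_sub_smul_apply_le Γ (1 + s) hs (hσ j).1
  simpa only [guessingProbability, RCLike.re_to_complex] using
    guessing_probability_bound_general (by positivity) hp Λ_le hNpos
end
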